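/- Reducibility-closure for the monoid structure of bags: the empty bag ∅ is reducible; and if M and N are reducible then M ⊎ N is reducible. -/

import Mathlib

/-!
Every one-step reduct of `S[t]` arises in one of three ways (`plugS_step_inv`): from a step of
`t`; from a step of the stack `S` alone, uniform in the plugged term; or from an interaction of
`t` with the innermost frame of `S` (`Head`). Two adjacent frames interact only when the inner one
is an `if` or a comprehension, and then they merge into one frame, so a stack step never
lengthens the stack.

* If `S[M]` and `S[N]` are c-SN, then so is `S[M ⊎ N]`: induction on the length of `S`, then on the
  accessibility of `S[M]` and of `S[N]`. A commuting conversion replaces `(S ∘ E)[M ⊎ N]` by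
  `S[E[M] ⊎ E[N]]`, whose stack is shorter, while the terms `S[E[M]]` and `S[E[N]]` known to be c-SN
  are the same as before.
* If `S[u]` is c-SN for some `u`, then so is `S[∅]`, in the same way.
* For the reducibility of `∅` it remains to find some `u` with `S[u]` c-SN. A reducible
  stack on `Bag A` only gives this for `u = [M]` with `M : A` reducible, so `A` must have a
  reducible term. A variable is one (`csn_plugS_var`), by induction on types: a variable
  interacts with no frame, so `S[x]` is c-SN as soon as some `S[u]` is; at function and record
  types the same is needed for `x N` and `x.ℓ`.
-/

namespace NRC

inductive BTy | int | bool | string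
deriving DecidableEq

inductive BVal
| int : Int → BVal
| bool : Bool → BVal
| str : String → BVal
deriving DecidableEq

inductive Ty
| base : BTy → Ty
| record : List (String × Ty) → Ty
| bag : Ty → Ty
| fn : Ty → Ty → Ty

inductive Tm
| var : Nat → Tm
| cst : String → List Tm → Tm
| boolLit : Bool → Tm
| table : String → Tm
| ite : Tm → Tm → Tm → Tm
| lam : Ty → Tm → Tm
| app : Tm → Tm → Tm
| rcd : List (String × Tm) → Tm
| proj : Tm → String → Tm
| isEmpty : Tm → Tm
| emp : Tm
| sng : Tm → Tm
| union : Tm → Tm → Tm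
| for_ : Tm → Tm → Tm

namespace Tm

def upRen (f : Nat → Nat) : Nat → Nat
| 0 => 0
| n+1 => f n + 1

def rename (f : Nat → Nat) : Tm → Tm
| .var n => .var (f n)
| .cst c ms => .cst c (ms.attach.map fun m => rename f m.1)
| .boolLit b => .boolLit b
| .table t => .table t
| .ite a b c => .ite (rename f a) (rename f b) (rename f c)
| .lam A m => .lam A (rename (upRen f) m)
| .app a b => .app (rename f a) (rename f b)
| .rcd fs => .rcd (fs.attach.map fun p => (p.1.1, rename f p.1.2))
| .proj m ℓ => .proj (rename f m) ℓ
| .isEmpty m => .isEmpty (rename f m)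
| .emp => .emp
| .sng m => .sng (rename f m)
| .union a b => .union (rename f a) (rename f b)
| .for_ a b => .for_ (rename f a) (rename (upRen f) b)
decreasing_by
  all_goals simp_wf
  all_goals first
    | (have := List.sizeOf_lt_of_mem m.2; omega)
    | (obtain ⟨⟨l,t⟩, hm⟩ := p; have := List.sizeOf_lt_of_mem hm; simp at this ⊢; omega)
    | omega

/-- shift all free variables up by one -/
def shift (M : Tm) : Tm := rename Nat.succ M

def upSub (σ : Nat → Tm) : Nat → Tm
| 0 => .var 0
| n+1 => shift (σ n)

/-- simultaneous (capture-avoiding, de Bruijn) substitution -/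
def subst (σ : Nat → Tm) : Tm → Tm
| .var n => σ n
| .cst c ms => .cst c (ms.attach.map fun m => subst σ m.1)
| .boolLit b => .boolLit b
| .table t => .table t
| .ite a b c => .ite (subst σ a) (subst σ b) (subst σ c)
| .lam A m => .lam A (subst (upSub σ) m)
| .app a b => .app (subst σ a) (subst σ b)
| .rcd fs => .rcd (fs.attach.map fun p => (p.1.1, subst σ p.1.2))
| .proj m ℓ => .proj (subst σ m) ℓ
| .isEmpty m => .isEmpty (subst σ m)
| .emp => .emp
| .sng m => .sng (subst σ m)
| .union a b => .union (subst σ a) (subst σ b)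
| .for_ a b => .for_ (subst σ a) (subst (upSub σ) b)
decreasing_by
  all_goals simp_wf
  all_goals first
    | (have := List.sizeOf_lt_of_mem m.2; omega)
    | (obtain ⟨⟨l,t⟩, hm⟩ := p; have := List.sizeOf_lt_of_mem hm; simp at this ⊢; omega)
    | omega

/-- substitution of a single term for variable 0: `M[x := N]` -/
def subst0 (M N : Tm) : Tm :=
  subst (fun n => match n with | 0 => N | n+1 => .var n) M

end Tm

/-- Elimination frames E[] ::= [] M | [].ℓ | if [] then M else N | for (x ← []) N -/
inductive Frame
| appF : Tm → Frame
| projF : String → Frame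
| iteF : Tm → Tm → Frame
| forF : Tm → Frame

namespace Frame

def plug : Frame → Tm → Tm
| .appF N, M => .app M N
| .projF ℓ, M => .proj M ℓ
| .iteF a b, M => .ite M a b
| .forF N, M => .for_ M N

/-- shift the terms occurring in a frame (used when a frame is pushed under
    the binder of a comprehension) -/
def shift : Frame → Frame
| .appF N => .appF N.shift
| .projF ℓ => .projF ℓ
| .iteF a b => .iteF a.shift b.shift
| .forF N => .forF (N.rename (Tm.upRen Nat.succ))

end Frame

/-- The rewrite relation ↝_c : β-rules, commuting conversions, and closure
    under arbitrary contexts. -/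
inductive StepC : Tm → Tm → Prop
-- β-rules
| beta {A M N} : StepC (.app (.lam A M) N) (M.subst0 N)
| projRcd {fs : List (String × Tm)} {ℓ M} : (ℓ, M) ∈ fs → StepC (.proj (.rcd fs) ℓ) M
| iteTrue {M N} : StepC (.ite (.boolLit true) M N) M
| iteFalse {M N} : StepC (.ite (.boolLit false) M N) N
| forSng {M N} : StepC (.for_ (.sng M) N) (N.subst0 M)
-- commuting conversions
| ccFor (E : Frame) {M N} : StepC (E.plug (.for_ M N)) (.for_ M (E.shift.plug N))
| ccIte (E : Frame) {L M N} : StepC (E.plug (.ite L M N)) (.ite L (E.plug M) (E.plug N))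
| ccEmp (E : Frame) : StepC (E.plug .emp) .emp
| ccUnion (E : Frame) {M N} : StepC (E.plug (.union M N)) (.union (E.plug M) (E.plug N))
-- congruence: closure under all contexts
| congCst {c ms₁ ms₂ m m'} : StepC m m' → StepC (.cst c (ms₁ ++ m :: ms₂)) (.cst c (ms₁ ++ m' :: ms₂))
| congIte₁ {a a' b c} : StepC a a' → StepC (.ite a b c) (.ite a' b c)
| congIte₂ {a b b' c} : StepC b b' → StepC (.ite a b c) (.ite a b' c)
| congIte₃ {a b c c'} : StepC c c' → StepC (.ite a b c) (.ite a b c')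
| congLam {A m m'} : StepC m m' → StepC (.lam A m) (.lam A m')
| congApp₁ {a a' b} : StepC a a' → StepC (.app a b) (.app a' b)
| congApp₂ {a b b'} : StepC b b' → StepC (.app a b) (.app a b')
| congRcd {fs₁ fs₂ : List (String × Tm)} {ℓ m m'} :
    StepC m m' → StepC (.rcd (fs₁ ++ (ℓ, m) :: fs₂)) (.rcd (fs₁ ++ (ℓ, m') :: fs₂))
| congProj {m m' ℓ} : StepC m m' → StepC (.proj m ℓ) (.proj m' ℓ)
| congIsEmpty {m m'} : StepC m m' → StepC (.isEmpty m) (.isEmpty m')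
| congSng {m m'} : StepC m m' → StepC (.sng m) (.sng m')
| congUnion₁ {a a' b} : StepC a a' → StepC (.union a b) (.union a' b)
| congUnion₂ {a b b'} : StepC b b' → StepC (.union a b) (.union a b')
| congFor₁ {a a' b} : StepC a a' → StepC (.for_ a b) (.for_ a' b)
| congFor₂ {a b b'} : StepC b b' → StepC (.for_ a b) (.for_ a b')

/-- A term is c-strongly-normalising if all ↝_c-reduction sequences from it
    are finite, i.e. it is accessible for the converse of ↝_c. -/
def CSN (M : Tm) : Prop := Acc (fun a b => StepC b a) M

/-- table signature: each table has a flat relation type -/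
abbrev TSig := String → Option (List (String × BTy))
/-- constant signature: first-order, over base types -/
abbrev CSig := String → Option (List BTy × BTy)

/-- Typing judgement Γ ⊢ M : A -/
inductive Typing (tsig : TSig) (csig : CSig) : List Ty → Tm → Ty → Prop
| var {Γ n A} : Γ[n]? = some A → Typing tsig csig Γ (.var n) A
| cst {Γ c Ms Os O} : csig c = some (Os, O) → Ms.length = Os.length →
    (∀ p ∈ Ms.zip Os, Typing tsig csig Γ p.1 (.base p.2)) →
    Typing tsig csig Γ (.cst c Ms) (.base O)
| boolLit {Γ b} : Typing tsig csig Γ (.boolLit b) (.base .bool)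
| table {Γ t fts} : tsig t = some fts →
    Typing tsig csig Γ (.table t) (.bag (.record (fts.map fun p => (p.1, Ty.base p.2))))
| ite {Γ L M N A} : Typing tsig csig Γ L (.base .bool) → Typing tsig csig Γ M A →
    Typing tsig csig Γ N A → Typing tsig csig Γ (.ite L M N) A
| lam {Γ A B M} : Typing tsig csig (A :: Γ) M B → Typing tsig csig Γ (.lam A M) (.fn A B)
| app {Γ A B M N} : Typing tsig csig Γ M (.fn A B) → Typing tsig csig Γ N A →
    Typing tsig csig Γ (.app M N) B
| rcd {Γ} {fs : List (String × Tm)} {fts : List (String × Ty)} : fs.length = fts.length →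
    (∀ p ∈ fs.zip fts, p.1.1 = p.2.1) →
    (∀ p ∈ fs.zip fts, Typing tsig csig Γ p.1.2 p.2.2) →
    Typing tsig csig Γ (.rcd fs) (.record fts)
| proj {Γ M fts ℓ A} : Typing tsig csig Γ M (.record fts) → (ℓ, A) ∈ fts →
    Typing tsig csig Γ (.proj M ℓ) A
| isEmpty {Γ M A} : Typing tsig csig Γ M (.bag A) →
    Typing tsig csig Γ (.isEmpty M) (.base .bool)
| emp {Γ A} : Typing tsig csig Γ .emp (.bag A)
| sng {Γ M A} : Typing tsig csig Γ M A → Typing tsig csig Γ (.sng M) (.bag A)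
| union {Γ M N A} : Typing tsig csig Γ M (.bag A) → Typing tsig csig Γ N (.bag A) →
    Typing tsig csig Γ (.union M N) (.bag A)
| for_ {Γ M N A B} : Typing tsig csig Γ M (.bag A) → Typing tsig csig (A :: Γ) N (.bag B) →
    Typing tsig csig Γ (.for_ M N) (.bag B)

end NRC

namespace NRC

/-- Frame stacks S ::= Id | S ∘ E, represented as lists of frames
    (innermost frame first; `Id` is `[]`, `S ∘ E` is `E :: S`). -/
abbrev Stack := List Frame

/-- Plugging: `Id[M] = M`, `(S ∘ E)[M] = S[E[M]]`. -/
def plugS : Stack → Tm → Tm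
| [], M => M
| E :: S, M => plugS S (E.plug M)

/-- Reducibility of frame stacks (at a type), defined by recursion on the type:
    * Id is reducible;
    * S ∘ ([] N) : (A → B) ⊸ C is reducible if S and N are reducible;
    * S ∘ ([].ℓ) : ⟨ℓ̄:Ā⟩ ⊸ C is reducible if S is reducible;
    * S : Bag A ⊸ C is reducible if S[[M]] is c-SN for all reducible M : A;
    * S : Bool ⊸ C is reducible if S[true] and S[false] are c-SN. -/
def RedS : Ty → Stack → Prop
  | _, [] => True
  | .bag B, S => ∀ M : Tm, (∀ S' : Stack, RedS B S' → CSN (plugS S' M)) → CSN (plugS S (.sng M))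
  | .base .bool, S => CSN (plugS S (.boolLit true)) ∧ CSN (plugS S (.boolLit false))
  | .fn A B, (.appF N) :: S =>
      RedS B S ∧ (∀ S' : Stack, RedS A S' → CSN (plugS S' N))
  | .record fts, (.projF ℓ) :: S => ∃ A : {A : Ty // (ℓ, A) ∈ fts}, RedS A.1 S
  | _, _ => False
termination_by A _ => sizeOf A
decreasing_by
  all_goals simp_wf
  all_goals first
    | omega
    | (have h1 := List.sizeOf_lt_of_mem A.2; simp at h1 ⊢; omega)

/-- A term M : A is reducible if S[M] is c-SN for every reducible S : A ⊸ C. -/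
def RedT (A : Ty) (M : Tm) : Prop := ∀ S : Stack, RedS A S → CSN (plugS S M)

end NRC

namespace NRC

/-! ### Reducts of a term plugged into a stack -/

/-- `Head E t r`: the term `E[t]` rewrites to `r` by a rule whose redex consists of the frame `E`
together with the outermost constructor of `t`. -/
inductive Head : Frame → Tm → Tm → Prop
| beta {A M N} : Head (.appF N) (.lam A M) (M.subst0 N)
| projRcd {fs : List (String × Tm)} {ℓ M} : (ℓ, M) ∈ fs → Head (.projF ℓ) (.rcd fs) M
| iteTrue {M N} : Head (.iteF M N) (.boolLit true) M
| iteFalse {M N} : Head (.iteF M N) (.boolLit false) N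
| forSng {M N} : Head (.forF N) (.sng M) (N.subst0 M)
| ccFor (E : Frame) {M N} : Head E (.for_ M N) (.for_ M (E.shift.plug N))
| ccIte (E : Frame) {L M N} : Head E (.ite L M N) (.ite L (E.plug M) (E.plug N))
| ccEmp (E : Frame) : Head E .emp .emp
| ccUnion (E : Frame) {M N} : Head E (.union M N) (.union (E.plug M) (E.plug N))

theorem StepC.plug {t t' : Tm} (h : StepC t t') (E : Frame) : StepC (E.plug t) (E.plug t') := by
  cases E
  · exact .congApp₁ h
  · exact .congProj h
  · exact .congIte₁ h
  · exact .congFor₁ h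

theorem StepC.plugS {t t' : Tm} (h : StepC t t') (S : Stack) :
    StepC (plugS S t) (plugS S t') := by
  induction S generalizing t t' with
  | nil => exact h
  | cons E S ih => exact ih (h.plug E)

theorem plug_step_inv {E : Frame} {t r : Tm} (h : StepC (E.plug t) r) :
    (∃ t', StepC t t' ∧ r = E.plug t') ∨
    (∃ E' : Frame, r = E'.plug t ∧ ∀ u, StepC (E.plug u) (E'.plug u)) ∨
    Head E t r := by
  generalize hs : E.plug t = s at h
  cases h with
  | ccFor E' =>
    cases E <;> cases E' <;> simp only [Frame.plug] at hs <;> cases hs <;>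
      exact .inr (.inr (.ccFor _))
  | ccIte E' =>
    cases E <;> cases E' <;> simp only [Frame.plug] at hs <;> cases hs <;>
      exact .inr (.inr (.ccIte _))
  | ccEmp E' =>
    cases E <;> cases E' <;> simp only [Frame.plug] at hs <;> cases hs <;>
      exact .inr (.inr (.ccEmp _))
  | ccUnion E' =>
    cases E <;> cases E' <;> simp only [Frame.plug] at hs <;> cases hs <;>
      exact .inr (.inr (.ccUnion _))
  | beta => cases E <;> cases hs; exact .inr (.inr .beta)
  | projRcd hm => cases E <;> cases hs; exact .inr (.inr (.projRcd hm))
  | iteTrue => cases E <;> cases hs; exact .inr (.inr .iteTrue)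
  | iteFalse => cases E <;> cases hs; exact .inr (.inr .iteFalse)
  | forSng => cases E <;> cases hs; exact .inr (.inr .forSng)
  | congIte₁ h => cases E <;> cases hs; exact .inl ⟨_, h, rfl⟩
  | congApp₁ h => cases E <;> cases hs; exact .inl ⟨_, h, rfl⟩
  | congProj h => cases E <;> cases hs; exact .inl ⟨_, h, rfl⟩
  | congFor₁ h => cases E <;> cases hs; exact .inl ⟨_, h, rfl⟩
  | congIte₂ h =>
    cases E <;> cases hs; exact .inr (.inl ⟨.iteF _ _, rfl, fun _ => .congIte₂ h⟩)
  | congIte₃ h =>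
    cases E <;> cases hs; exact .inr (.inl ⟨.iteF _ _, rfl, fun _ => .congIte₃ h⟩)
  | congApp₂ h =>
    cases E <;> cases hs; exact .inr (.inl ⟨.appF _, rfl, fun _ => .congApp₂ h⟩)
  | congFor₂ h =>
    cases E <;> cases hs; exact .inr (.inl ⟨.forF _, rfl, fun _ => .congFor₂ h⟩)
  | _ => cases E <;> cases hs

/-- Adjacent frames that interact merge into a single frame, whatever term is plugged in. -/
theorem head_plug_inv {E E₂ : Frame} {t r : Tm} (h : Head E₂ (E.plug t) r) :
    ∃ E' : Frame, r = E'.plug t ∧ ∀ u, StepC (E₂.plug (E.plug u)) (E'.plug u) := by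
  generalize hs : E.plug t = s at h
  cases h with
  | ccFor => cases E <;> cases hs; exact ⟨.forF _, rfl, fun _ => .ccFor E₂⟩
  | ccIte => cases E <;> cases hs; exact ⟨.iteF _ _, rfl, fun _ => .ccIte E₂⟩
  | _ => cases E <;> cases hs

/-- The three origins of a reduct of `S[t]`: the plugged term, the stack, or an interaction between
the two. A stack step is recorded as a step `S[u] ↝ S'[u]` for all `u`. -/
theorem plugS_step_inv {S : Stack} {t r : Tm} (h : StepC (plugS S t) r) :
    (∃ t', StepC t t' ∧ r = plugS S t') ∨
    (∃ S' : Stack, S'.length ≤ S.length ∧ r = plugS S' t ∧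
      ∀ u, StepC (plugS S u) (plugS S' u)) ∨
    (∃ E S' r', S = E :: S' ∧ Head E t r' ∧ r = plugS S' r') := by
  induction S generalizing t with
  | nil => exact .inl ⟨r, h, rfl⟩
  | cons E S ih =>
    rcases ih (t := E.plug t) h with ⟨t', ht, rfl⟩ | ⟨S', hl, rfl, hS⟩ | ⟨E₂, S', r', rfl, hh, rfl⟩
    · rcases plug_step_inv ht with ⟨t'', ht', rfl⟩ | ⟨E', rfl, hE⟩ | hh
      · exact .inl ⟨t'', ht', rfl⟩
      · exact .inr (.inl ⟨E' :: S, le_rfl, rfl, fun u => (hE u).plugS S⟩)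
      · exact .inr (.inr ⟨E, S, t', rfl, hh, rfl⟩)
    · exact .inr (.inl ⟨E :: S', by simpa using hl, rfl, fun u => hS (E.plug u)⟩)
    · obtain ⟨E', rfl, hE⟩ := head_plug_inv hh
      exact .inr (.inl ⟨E' :: S', by simp, rfl, fun u => (hE u).plugS S'⟩)

/-! ### Normal forms and atoms -/

theorem not_step_emp {r : Tm} : ¬ StepC .emp r := by
  intro h
  generalize hs : Tm.emp = s at h
  cases h with
  | ccFor E | ccIte E | ccEmp E | ccUnion E => cases E <;> cases hs
  | _ => cases hs

theorem not_step_var {n : Nat} {r : Tm} : ¬ StepC (.var n) r := by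
  intro h
  generalize hs : Tm.var n = s at h
  cases h with
  | ccFor E | ccIte E | ccEmp E | ccUnion E => cases E <;> cases hs
  | _ => cases hs

theorem step_union_inv {M N r : Tm} (h : StepC (.union M N) r) :
    (∃ M', StepC M M' ∧ r = .union M' N) ∨ (∃ N', StepC N N' ∧ r = .union M N') := by
  generalize hs : Tm.union M N = s at h
  cases h with
  | ccFor E | ccIte E | ccEmp E | ccUnion E => cases E <;> cases hs
  | congUnion₁ h => cases hs; exact .inl ⟨_, h, rfl⟩
  | congUnion₂ h => cases hs; exact .inr ⟨_, h, rfl⟩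
  | _ => cases hs

/-- Terms whose head is a variable under at most one application or projection; they interact with
no frame. -/
inductive Atom : Tm → Prop
| var {n} : Atom (.var n)
| app {n N} : Atom (.app (.var n) N)
| proj {n ℓ} : Atom (.proj (.var n) ℓ)

theorem Atom.step {a a' : Tm} (ha : Atom a) (h : StepC a a') : Atom a' := by
  cases ha with
  | var => exact absurd h not_step_var
  | @app n N =>
    generalize hs : Tm.app (.var n) N = s at h
    cases h with
    | ccFor E | ccIte E | ccEmp E | ccUnion E => cases E <;> cases hs
    | congApp₁ h => cases hs; exact absurd h not_step_var
    | congApp₂ => cases hs; exact .app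
    | _ => cases hs
  | @proj n ℓ =>
    generalize hs : Tm.proj (.var n) ℓ = s at h
    cases h with
    | ccFor E | ccIte E | ccEmp E | ccUnion E => cases E <;> cases hs
    | congProj h => cases hs; exact absurd h not_step_var
    | _ => cases hs

theorem Atom.not_head {a r : Tm} {E : Frame} (ha : Atom a) : ¬ Head E a r := by
  intro h
  cases ha <;> cases h

theorem CSN.step {t t' : Tm} (h : CSN t) (hs : StepC t t') : CSN t' := h.inv hs

/-- An atom contributes no interaction with the stack, so a reduction of `S[a]` interleaves steps of
`a` with stack steps, and the latter are also steps of `S[u]`. -/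
theorem csn_plugS_atom {u : Tm} {S : Stack} (hu : CSN (plugS S u)) {a : Tm} (hc : CSN a)
    (ha : Atom a) : CSN (plugS S a) := by
  generalize hp : plugS S u = p at hu
  induction hu generalizing S a with
  | intro p _ ihp =>
    subst hp
    induction hc with
    | intro a hca iha =>
      refine ⟨_, fun r hr => ?_⟩
      rcases plugS_step_inv hr with ⟨a', h, rfl⟩ | ⟨S', -, rfl, hS⟩ | ⟨E, S', r', rfl, hh, rfl⟩
      · exact iha a' h (ha.step h)
      · exact ihp _ (hS u) ⟨a, hca⟩ ha rfl
      · exact absurd hh ha.not_head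

theorem csn_var (n : Nat) : CSN (.var n) := ⟨_, fun _ h => absurd h not_step_var⟩

theorem csn_app_var {N : Tm} (hN : CSN N) (n : Nat) : CSN (.app (.var n) N) := by
  induction hN with
  | intro N _ ih =>
    refine ⟨_, fun r h => ?_⟩
    change StepC _ _ at h
    generalize hs : Tm.app (.var n) N = s at h
    cases h with
    | ccFor E | ccIte E | ccEmp E | ccUnion E => cases E <;> cases hs
    | congApp₁ h => cases hs; exact absurd h not_step_var
    | congApp₂ h => cases hs; exact ih _ h
    | _ => cases hs

theorem csn_proj_var (n : Nat) (ℓ : String) : CSN (.proj (.var n) ℓ) := by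
  refine ⟨_, fun r h => ?_⟩
  change StepC _ _ at h
  generalize hs : Tm.proj (.var n) ℓ = s at h
  cases h with
  | ccFor E | ccIte E | ccEmp E | ccUnion E => cases E <;> cases hs
  | congProj h => cases hs; exact absurd h not_step_var
  | _ => cases hs

/-! ### Reducibility of variables -/

/-- Variables are reducible at every type; in particular every type has a reducible term. -/
theorem csn_plugS_var (n : Nat) : ∀ (A : Ty) (S : Stack), RedS A S → CSN (plugS S (.var n))
  | _, [], _ => csn_var n
  | .bag B, E :: S, h => by
    simp only [RedS] at h
    exact csn_plugS_atom (h (.var n) fun S' hS' => csn_plugS_var n B S' hS') (csn_var n) .var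
  | .base .bool, E :: S, h => by
    simp only [RedS] at h
    exact csn_plugS_atom h.1 (csn_var n) .var
  | .base .int, E :: S, h => by simp [RedS] at h
  | .base .string, E :: S, h => by simp [RedS] at h
  | .fn A B, E :: S, h => by
    cases E with
    | appF N =>
      simp only [RedS] at h
      have hN : CSN N := h.2 [] (by simp [RedS])
      exact csn_plugS_atom (csn_plugS_var n B S h.1) (csn_app_var hN n) .app
    | _ => simp [RedS] at h
  | .record fts, E :: S, h => by
    cases E with
    | projF ℓ =>
      simp only [RedS] at h
      obtain ⟨⟨A, hA⟩, hS⟩ := h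
      have hlt := List.sizeOf_lt_of_mem hA
      exact csn_plugS_atom (csn_plugS_var n A S hS) (csn_proj_var n ℓ) .proj
    | _ => simp [RedS] at h
termination_by A => sizeOf A
decreasing_by
  all_goals simp_wf
  all_goals first
    | omega
    | (simp at hlt; omega)

/-! ### The empty bag and unions -/

/-- The term `u` only serves to bound the reductions of the stack; since absorbing `E` in
`(S ∘ E)[∅]` leaves the stack `S`, the inductive hypothesis is then used with `E[u]`. -/
theorem csn_plugS_emp {u : Tm} {S : Stack} (hu : CSN (plugS S u)) : CSN (plugS S .emp) := by
  induction hk : S.length using Nat.strong_induction_on generalizing S u with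
  | _ k ihk =>
    replace hk := hk.le
    generalize hp : plugS S u = p at hu
    induction hu generalizing S with
    | intro p hpacc ihp =>
      subst hp
      refine ⟨_, fun r hr => ?_⟩
      rcases plugS_step_inv hr with ⟨a', h, rfl⟩ | ⟨S', hl, rfl, hS⟩ | ⟨E, S', r', rfl, hh, rfl⟩
      · exact absurd h not_step_emp
      · exact ihp _ (hS u) (hl.trans hk) rfl
      · cases hh
        exact ihk S'.length (by simp at hk; omega) (u := E.plug u) (S := S') ⟨_, hpacc⟩ rfl

theorem csn_plugS_union {S : Stack} {M N : Tm} (hM : CSN (plugS S M)) (hN : CSN (plugS S N)) :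
    CSN (plugS S (.union M N)) := by
  induction hk : S.length using Nat.strong_induction_on generalizing S M N with
  | _ k ihk =>
    replace hk := hk.le
    generalize hp : plugS S M = p at hM
    induction hM generalizing S M N with
    | intro p hpacc ihp =>
      generalize hq : plugS S N = q at hN
      induction hN generalizing N with
      | intro q hqacc ihq =>
        subst hp hq
        have hN : CSN (plugS S N) := ⟨_, hqacc⟩
        refine ⟨_, fun r hr => ?_⟩
        rcases plugS_step_inv hr with ⟨t, h, rfl⟩ | ⟨S', hl, rfl, hS⟩ | ⟨E, S', r', rfl, hh, rfl⟩
        · rcases step_union_inv h with ⟨M', h', rfl⟩ | ⟨N', h', rfl⟩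
          · exact ihp _ (h'.plugS S) hN hk rfl
          · exact ihq _ (h'.plugS S) rfl
        · exact ihp _ (hS M) (hN.step (hS N)) (hl.trans hk) rfl
        · cases hh
          exact ihk S'.length (by simp at hk; omega) (S := S') (M := E.plug M) (N := E.plug N)
            ⟨_, hpacc⟩ hN rfl

end NRC

/-- Reducibility-closure for the monoid structure of bags:
    the empty bag is reducible, and union preserves reducibility. -/
theorem reducibility_closure_monoid :
    (∀ A : NRC.Ty, NRC.RedT (.bag A) .emp) ∧
    (∀ (A : NRC.Ty) (M N : NRC.Tm),
       NRC.RedT (.bag A) M → NRC.RedT (.bag A) N →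
       NRC.RedT (.bag A) (.union M N)) := by
  exact ⟨fun A S hS => NRC.csn_plugS_emp (NRC.csn_plugS_var 0 (.bag A) S hS),
    fun A M N hM hN S hS => NRC.csn_plugS_union (hM S hS) (hN S hS)⟩
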